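/- Suppose F : X → ℝ is L_W-smooth and lower-bounded, i.e., F(W) ≥ F̃ for all W ∈ X; the FLT iterates satisfy W^t − W^{t−1} = −η Ā ∇F(W^{t−1}) for all t ≥ 1 with step size η > 0; the per-step gradient-deviation bound ‖(I_M − Ā)·∇F(W^{t−1})‖ ≤ L_W · a · ‖W^t − W^{t−1}‖ holds for all t ≥ 1, where a is the operator norm of V ↦ (I_M − Ā)V on X; and c := 1/(2η) − L_W/2 − (η/2)·L_W²·a² > 0. Then for every T ≥ 1, Σ_{t=1}^{T} ‖W^t − W^{t−1}‖² ≤ (F(W^0) − F̃)/c, and consequently the averaged optimality gap satisfies (1/T)·Σ_{t=1}^{T} ‖W^t − W^{t−1}‖² ≤ (F(W^0) − F̃)/(c·T), i.e., FLT converges at rate O(1/T) in the number of communication rounds. -/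

import Mathlib

open scoped RealInnerProductSpace

/-- Left multiplication by an `M × M` matrix `A` on the space of `M × d` real matrices,
realized as the Euclidean space `EuclideanSpace ℝ (Fin M × Fin d)` (with the Frobenius
inner product), via the Kronecker product `A ⊗ I_d`. -/
noncomputable def matLeftMul (M d : ℕ) (A : Matrix (Fin M) (Fin M) ℝ) :
    EuclideanSpace ℝ (Fin M × Fin d) →L[ℝ] EuclideanSpace ℝ (Fin M × Fin d) :=
  LinearMap.toContinuousLinearMap
    (Matrix.toEuclideanLin (Matrix.kroneckerMap (· * ·) A (1 : Matrix (Fin d) (Fin d) ℝ)))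

theorem matLeftMul_one_sub (M d : ℕ) (A : Matrix (Fin M) (Fin M) ℝ)
    (v : EuclideanSpace ℝ (Fin M × Fin d)) :
    matLeftMul M d (1 - A) v = v - matLeftMul M d A v := by
  have h : Matrix.kroneckerMap (· * ·) (1 - A) (1 : Matrix (Fin d) (Fin d) ℝ)
      = 1 - Matrix.kroneckerMap (· * ·) A (1 : Matrix (Fin d) (Fin d) ℝ) := by
    have h1 : Matrix.kroneckerMap (· * ·) (1 : Matrix (Fin M) (Fin M) ℝ)
        (1 : Matrix (Fin d) (Fin d) ℝ) = 1 := Matrix.one_kronecker_one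
    ext i j
    have h2 := congrFun (congrFun h1 i) j
    simp only [Matrix.kroneckerMap_apply, Matrix.sub_apply, sub_mul] at h2 ⊢
    rw [h2]
  unfold matLeftMul
  rw [h]
  simp [map_sub, Matrix.toEuclideanLin, Matrix.toLpLin_one]

theorem descent_aux {E : Type*} [NormedAddCommGroup E] [InnerProductSpace ℝ E] [CompleteSpace E]
    (F : E → ℝ) (g : E → E) (hF : ∀ V, HasGradientAt F (g V) V) (L : ℝ)
    (hs : ∀ U V, ‖g U - g V‖ ≤ L * ‖U - V‖) (x D : E) :
    F (x + D) ≤ F x + inner ℝ (g x) D + L / 2 * ‖D‖ ^ 2 := by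
  have hd : ∀ t : ℝ, HasDerivAt
      (fun t : ℝ => F (x + t • D) - t * inner ℝ (g x) D - L / 2 * ‖D‖ ^ 2 * t ^ 2)
      (inner ℝ (g (x + t • D)) D - inner ℝ (g x) D - L * ‖D‖ ^ 2 * t) t := by
    intro t
    have h1 : HasDerivAt (fun t : ℝ => x + t • D) D t := by
      simpa using ((hasDerivAt_id t).smul_const D).const_add x
    have h2 := (hF (x + t • D)).hasFDerivAt.comp_hasDerivAt t h1
    have h3 := (h2.sub ((hasDerivAt_id t).mul_const (inner ℝ (g x) D))).sub
      (((hasDerivAt_id t).pow 2).const_mul (L / 2 * ‖D‖ ^ 2))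
    refine h3.congr_deriv ?_
    simp [InnerProductSpace.toDual_apply_apply]
    ring
  have hanti : AntitoneOn
      (fun t : ℝ => F (x + t • D) - t * inner ℝ (g x) D - L / 2 * ‖D‖ ^ 2 * t ^ 2)
      (Set.Icc 0 1) := by
    refine antitoneOn_of_deriv_nonpos (convex_Icc 0 1)
      (fun t _ => (hd t).continuousAt.continuousWithinAt)
      (fun t _ => (hd t).differentiableAt.differentiableWithinAt) ?_
    intro t ht
    rw [interior_Icc] at ht
    rw [(hd t).deriv, ← inner_sub_left]
    have h1 := real_inner_le_norm (g (x + t • D) - g x) D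
    have h2 := hs (x + t • D) x
    rw [add_sub_cancel_left, norm_smul, Real.norm_of_nonneg ht.1.le] at h2
    have h3 := mul_le_mul_of_nonneg_right h2 (norm_nonneg D)
    nlinarith
  have := hanti (Set.left_mem_Icc.2 zero_le_one) (Set.right_mem_Icc.2 zero_le_one) zero_le_one
  simp at this
  linarith

/-- FLT converges at rate `O(1/T)` in the number of communication rounds, for a
lower-bounded `L_W`-smooth objective. -/
theorem flt_rate (M d : ℕ) (hM : 1 ≤ M) (hd : 1 ≤ d)
    (Abar : Matrix (Fin M) (Fin M) ℝ)
    (F : EuclideanSpace ℝ (Fin M × Fin d) → ℝ)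
    (gradF : EuclideanSpace ℝ (Fin M × Fin d) → EuclideanSpace ℝ (Fin M × Fin d))
    (hF : ∀ V, HasGradientAt F (gradF V) V)
    (LW : ℝ)
    (hsmooth : ∀ U V : EuclideanSpace ℝ (Fin M × Fin d),
      ‖gradF U - gradF V‖ ≤ LW * ‖U - V‖)
    (Ftilde : ℝ) (hlb : ∀ V, Ftilde ≤ F V)
    (η : ℝ) (hη : 0 < η)
    (W : ℕ → EuclideanSpace ℝ (Fin M × Fin d))
    (hupd : ∀ t : ℕ, 1 ≤ t →
      W t - W (t - 1) = -(η • matLeftMul M d Abar (gradF (W (t - 1)))))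
    (a : ℝ) (ha : a = ‖matLeftMul M d ((1 : Matrix (Fin M) (Fin M) ℝ) - Abar)‖)
    (hdev : ∀ t : ℕ, 1 ≤ t →
      ‖matLeftMul M d ((1 : Matrix (Fin M) (Fin M) ℝ) - Abar) (gradF (W (t - 1)))‖ ≤
        LW * a * ‖W t - W (t - 1)‖)
    (c : ℝ) (hc : c = 1 / (2 * η) - LW / 2 - (η / 2) * LW ^ 2 * a ^ 2)
    (hcpos : 0 < c) :
    ∀ T : ℕ, 1 ≤ T →
      (∑ t ∈ Finset.Icc 1 T, ‖W t - W (t - 1)‖ ^ 2) ≤ (F (W 0) - Ftilde) / c ∧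
        (1 / (T : ℝ)) * (∑ t ∈ Finset.Icc 1 T, ‖W t - W (t - 1)‖ ^ 2) ≤
          (F (W 0) - Ftilde) / (c * (T : ℝ)) := by
  have hstep : ∀ t : ℕ, c * ‖W (t + 1) - W t‖ ^ 2 ≤ F (W t) - F (W (t + 1)) := by
    intro t
    have hu := hupd (t + 1) (by omega)
    have he := hdev (t + 1) (by omega)
    rw [Nat.add_sub_cancel] at hu he
    rw [matLeftMul_one_sub] at he
    have hdes := descent_aux F gradF hF LW hsmooth (W t) (W (t + 1) - W t)
    rw [add_sub_cancel] at hdes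
    set D := W (t + 1) - W t with hD
    set g := gradF (W t) with hg
    set e := g - matLeftMul M d Abar g with hee
    have hge : η • g = η • e - D := by
      rw [hu, hee, smul_sub]; abel
    have hin : η * inner ℝ g D = η * inner ℝ e D - ‖D‖ ^ 2 := by
      rw [← real_inner_smul_left, hge, inner_sub_left, real_inner_smul_left,
        real_inner_self_eq_norm_sq]
    have hsq : ‖e‖ ^ 2 ≤ (LW * a * ‖D‖) ^ 2 := pow_le_pow_left₀ (norm_nonneg _) he 2
    have hy : η * inner ℝ e D ≤ η ^ 2 / 2 * ‖e‖ ^ 2 + ‖D‖ ^ 2 / 2 := by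
      have h1 := mul_le_mul_of_nonneg_left (real_inner_le_norm e D) hη.le
      nlinarith [sq_nonneg (η * ‖e‖ - ‖D‖)]
    have hcη : η * c = 1 / 2 - η * LW / 2 - η ^ 2 / 2 * LW ^ 2 * a ^ 2 := by
      rw [hc]; field_simp
    have h2 := mul_le_mul_of_nonneg_left hsq (by positivity : 0 ≤ η ^ 2 / 2)
    have h3 := mul_le_mul_of_nonneg_left hdes hη.le
    refine le_of_mul_le_mul_left ?_ hη
    have h4 : η * (c * ‖D‖ ^ 2) =
        (1 / 2 - η * LW / 2 - η ^ 2 / 2 * LW ^ 2 * a ^ 2) * ‖D‖ ^ 2 := by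
      rw [← hcη]; ring
    rw [h4]
    linarith
  have hsum : ∀ T : ℕ, c * (∑ t ∈ Finset.Icc 1 T, ‖W t - W (t - 1)‖ ^ 2)
      ≤ F (W 0) - F (W T) := by
    intro T
    induction T with
    | zero => simp
    | succ n ih =>
      rw [Finset.sum_Icc_succ_top (by omega), mul_add, Nat.add_sub_cancel]
      linarith [hstep n]
  intro T hT
  have h1 : (∑ t ∈ Finset.Icc 1 T, ‖W t - W (t - 1)‖ ^ 2) ≤ (F (W 0) - Ftilde) / c := by
    rw [le_div_iff₀ hcpos]
    linarith [hsum T, hlb (W T)]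
  refine ⟨h1, ?_⟩
  have hT' : (0 : ℝ) < T := by exact_mod_cast hT
  rw [← div_div, one_div_mul_eq_div]
  gcongr
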